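/- Let E = (r_1, …, r_n) be a finite sequence of rows with all entries integers, and suppose for some index i that the consecutive pair (r_i, r_{i+1}) satisfies the alternating sign condition, i.e. η_{i+1} = (−1)^{C(r_i)} η_i. Then the dual signs satisfy η̂_i = (−1)^{C(r_{i+1})} η̂_{i+1}; that is, in dual(E) (where r̂_{i+1} immediately precedes r̂_i, and C(r̂_j) = C(r_j)), the consecutive pair (r̂_{i+1}, r̂_i) also satisfies the alternating sign condition. -/

import Mathlib

/-- A row `r = (A, B, l, η)`: the data of an extended segment `([A, B], l, η)`
(with the constraints `B ≤ A` and `η ∈ {1, -1}` imposed as hypotheses via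
`IsRow`). All entries are integers. -/
structure Row where
  A : ℤ
  B : ℤ
  l : ℤ
  eta : ℤ
deriving DecidableEq

instance : Inhabited Row := ⟨⟨0, 0, 0, 1⟩⟩

/-- `(-1)^n` for an integer `n` (only the parity of `n` matters). -/
def epow (n : ℤ) : ℤ := (-1) ^ n.natAbs

/-- `a(r) = A + B + 1`. -/
def Row.a (r : Row) : ℤ := r.A + r.B + 1

/-- `b(r) = A - B + 1`. -/
def Row.b (r : Row) : ℤ := r.A - r.B + 1

/-- `C(r) = b(r) - 2l(r)`, the number of circles of `r`. -/
def Row.C (r : Row) : ℤ := r.b - 2 * r.l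

/-- The defining constraints on a row: `B ≤ A` and `η ∈ {1, -1}`. -/
def IsRow (r : Row) : Prop := r.B ≤ r.A ∧ (r.eta = 1 ∨ r.eta = -1)

/-- `C(E) = Σ_j C(r_j)` for a sequence of rows `E`. -/
def CE (E : List Row) : ℤ := (E.map Row.C).sum

/-- `α_i = Σ_{j < i} a(r_j)` (the list `E` is 0-indexed here). -/
def alphaSum (E : List Row) (i : ℕ) : ℤ := ((E.take i).map Row.a).sum

/-- `β_i = Σ_{j > i} b(r_j)` (the list `E` is 0-indexed here). -/
def betaSum (E : List Row) (i : ℕ) : ℤ := ((E.drop (i + 1)).map Row.b).sum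

/-- The dual `r̂_i = (A_i, −B_i, l_i + B_i, (−1)^{α_i+β_i} η_i)` of the `i`-th
row of `E`. -/
def dualRow (E : List Row) (i : ℕ) : Row :=
  let r := E.getD i default
  ⟨r.A, -r.B, r.l + r.B, epow (alphaSum E i + betaSum E i) * r.eta⟩

/-- The dual sequence `dual(E) = (r̂_n, …, r̂_1)`. -/
def dualList (E : List Row) : List Row :=
  ((List.range E.length).map (dualRow E)).reverse

theorem epow_add' (m n : ℤ) : epow (m + n) = epow m * epow n := by
  unfold epow
  rw [← pow_add]
  apply neg_one_pow_congr
  simp only [Nat.even_add, Int.natAbs_even, Int.even_add]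

theorem epow_even' (m : ℤ) (h : Even m) : epow m = 1 := by
  unfold epow
  exact (Int.natAbs_even.mpr h).neg_one_pow

/-- Alternating dual (Lemma `Alternating dual`(1)): if the consecutive pair
`(r_i, r_{i+1})` of `E` satisfies the alternating sign condition
`η_{i+1} = (−1)^{C(r_i)} η_i`, then the dual signs satisfy
`η̂_i = (−1)^{C(r_{i+1})} η̂_{i+1}`, i.e. the consecutive pair
`(r̂_{i+1}, r̂_i)` of `dual(E)` also satisfies the alternating sign condition. -/
theorem alternating_dual (E : List Row) (hE : ∀ r ∈ E, IsRow r)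
    (i : ℕ) (hi : i + 1 < E.length)
    (halt : (E.get ⟨i + 1, hi⟩).eta =
      epow ((E.get ⟨i, by omega⟩).C) * (E.get ⟨i, by omega⟩).eta) :
    (dualRow E i).eta = epow ((E.get ⟨i + 1, hi⟩).C) * (dualRow E (i + 1)).eta := by
  have hi' : i < E.length := by omega
  have h1 : alphaSum E (i + 1) = alphaSum E i + (E[i]).a := by
    unfold alphaSum
    rw [List.take_succ_eq_append_getElem hi', List.map_append, List.sum_append]
    simp only [List.map_cons, List.map_nil, List.sum_cons, List.sum_nil, add_zero]
  have h2 : betaSum E i = (E[i + 1]).b + betaSum E (i + 1) := by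
    simp only [betaSum]
    rw [List.drop_eq_getElem_cons hi, List.map_cons, List.sum_cons]
  simp only [List.get_eq_getElem] at halt ⊢
  simp only [dualRow, List.getD_eq_getElem _ _ hi', List.getD_eq_getElem _ _ hi]
  rw [halt, ← mul_assoc, ← mul_assoc, ← epow_add', ← epow_add', h1, h2]
  congr 1
  have : E[i + 1].C + (alphaSum E i + E[i].a + betaSum E (i + 1)) + E[i].C
      = (alphaSum E i + (E[i + 1].b + betaSum E (i + 1)))
        + 2 * (E[i].A + 1 - E[i].l - E[i + 1].l) := by
    simp only [Row.C, Row.a, Row.b]; ring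
  rw [this, epow_add' _ (2 * _), epow_even' (2 * _) (even_two_mul _), mul_one]
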